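/- Suppose a prediction set Ĉ_{n,α} satisfies the uniform finite-sample coverage guarantee sup_{P ∈ P_SI} P_P(Δ ∉ Ĉ_{n,α}(X)) ≤ α for some α ∈ (0,1). Then for every P ∈ P_SI and every y ∈ ℝ, P_P(y ∉ Ĉ_{n,α}(X)) ≤ α; consequently, for every P ∈ P_SI, E_P[length(Ĉ_{n,α}(X))] = ∞. -/

import Mathlib

/-!
STATEMENT 0 (no-free-lunch for conditional independence testing, finite sample):
If a (possibly randomized) test `ψ : D^n → [0,1]` on the full data
`(X, Y(1), Y(0), T)` has level `α` over the strong-ignorability class `P_SI`,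
then it has level `α` over the whole class `E`.
-/

open MeasureTheory ProbabilityTheory Filter

noncomputable section

/-- The full-data sample space `D = ℝ^p × ℝ² × {0,1}`. -/
abbrev FullData (p : ℕ) : Type := (Fin p → ℝ) × ℝ × ℝ × Bool

/-- Covariate coordinate. -/
def Xc {p : ℕ} (ω : FullData p) : Fin p → ℝ := ω.1

/-- Treated potential outcome coordinate `Y(1)`. -/
def Y1c {p : ℕ} (ω : FullData p) : ℝ := ω.2.1

/-- Control potential outcome coordinate `Y(0)`. -/
def Y0c {p : ℕ} (ω : FullData p) : ℝ := ω.2.2.1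

/-- Treatment coordinate `T`. -/
def Tc {p : ℕ} (ω : FullData p) : Bool := ω.2.2.2

lemma measurable_Xc {p : ℕ} : Measurable (Xc (p := p)) := measurable_fst

/-- The σ-algebra generated by the covariates `X`. -/
def mX (p : ℕ) : MeasurableSpace (FullData p) :=
  MeasurableSpace.comap Xc inferInstance

lemma mX_le (p : ℕ) : mX p ≤ (inferInstance : MeasurableSpace (FullData p)) := measurable_Xc.comap_le

/-- The class `E`: distributions of `(X, Y(1), Y(0), T)` such that at least one coordinate
of `X` has a law absolutely continuous w.r.t. Lebesgue measure, and the laws of `Y(1)` and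
`Y(0)` are atomless (continuous). -/
def memE {p : ℕ} (P : ProbabilityMeasure (FullData p)) : Prop :=
  (∃ j : Fin p,
    ((P : Measure (FullData p)).map (fun ω => Xc ω j)).AbsolutelyContinuous
      (volume : Measure ℝ)) ∧
  (∀ y : ℝ, ((P : Measure (FullData p)).map Y1c) {y} = 0) ∧
  (∀ y : ℝ, ((P : Measure (FullData p)).map Y0c) {y} = 0)

/-- The strong-ignorability class `P_SI ⊆ E`: `(Y(1), Y(0)) ⫫ T | X`. -/
def memPSI {p : ℕ} (P : ProbabilityMeasure (FullData p)) : Prop :=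
  memE P ∧
    CondIndepFun (mX p) (mX_le p) (fun ω => (Y1c ω, Y0c ω)) Tc
      (P : Measure (FullData p))


/-- The observed-data sample space: one observed unit is `(X, T, Y)`. -/
abbrev Obs (p : ℕ) : Type := (Fin p → ℝ) × Bool × ℝ

/-- The observed data of a unit: `(X, T, Y)` with `Y = T·Y(1) + (1 - T)·Y(0)`. -/
def obs {p : ℕ} (ω : FullData p) : Obs p :=
  (ω.1, ω.2.2.2, if ω.2.2.2 then ω.2.1 else ω.2.2.1)

/-- Joint law of `n + 1` i.i.d. full-data observations from `P`
(the first `n` units are the study sample, the last one is the test unit). -/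
def jointLaw {p : ℕ} (n : ℕ) (P : ProbabilityMeasure (FullData p)) :
    Measure (Fin (n + 1) → FullData p) :=
  Measure.pi fun _ : Fin (n + 1) => (P : Measure (FullData p))

/-- The observed data `O_n` extracted from `n + 1` full-data points. -/
def obsData {p : ℕ} (n : ℕ) (ω : Fin (n + 1) → FullData p) : Fin n → Obs p :=
  fun i => obs (ω i.castSucc)

/-- Covariates `X` of the test unit. -/
def testX {p : ℕ} (n : ℕ) (ω : Fin (n + 1) → FullData p) : Fin p → ℝ :=
  Xc (ω (Fin.last n))

/-- Individual treatment effect `Δ = Y(1) - Y(0)` of the test unit. -/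
def testITE {p : ℕ} (n : ℕ) (ω : Fin (n + 1) → FullData p) : ℝ :=
  Y1c (ω (Fin.last n)) - Y0c (ω (Fin.last n))

/-!
Let `P` be any law in `E` and `g` a function of the covariates. Conditioning `P` on `T = g(X)` makes
the treatment a function of `X`, so the conditioned law is strongly ignorable. An i.i.d. sample of
size `N` from it is an i.i.d. sample from `P` conditioned on `T_i = g(X_i)` for all `i`. Draw `g`
uniformly among the labellings of the first `m` digits of `X`: since `X` is atomless, the sampled
covariates are almost surely separated by finitely many digits, and from then on `g` agrees with the
treatments with probability exactly `2^{-N}`, whatever the data. Letting `m → ∞`, every bound that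
holds uniformly over the strongly ignorable laws thus holds over all of `E`.

In particular the coverage guarantee survives any modification of the never observed potential
outcomes that stays in `E`, for instance the one making every treatment effect equal to `y`. So each
`y` is covered with probability at least `1 - α`, and integrating over `y` gives infinite expected
length.
-/

open scoped ENNReal Topology

section ProductMeasures

variable {ι : Type*} [Fintype ι]

lemma ae_injective_pi {S : Type*} [MeasurableSpace S] [MeasurableEq S] (ν : ι → Measure S)
    [∀ i, SigmaFinite (ν i)] [∀ i, NullSingletonClass (ν i)] :
    ∀ᵐ x ∂Measure.pi ν, Function.Injective x := by
  classical
  have hne : ∀ i j, ∀ᵐ x ∂Measure.pi ν, x i = x j → i = j := by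
    intro i j
    by_cases hij : i = j
    · exact ae_of_all _ fun _ _ => hij
    have hsplit := measurePreserving_piEquivPiSubtypeProd ν (· ≠ i)
    let D : Set (({k // k ≠ i} → S) × ({k // ¬ k ≠ i} → S)) :=
      {q | q.2 ⟨i, not_not.2 rfl⟩ = q.1 ⟨j, Ne.symm hij⟩}
    have hD : MeasurableSet D := measurableSet_eq_fun (by fun_prop) (by fun_prop)
    have hD_null := (Measure.measure_prod_null hD).2 <| ae_of_all
      (Measure.pi fun k : {k // k ≠ i} => ν k) fun y =>
        Measure.pi_hyperplane (fun k : {k // ¬ k ≠ i} => ν k) _ (y ⟨j, Ne.symm hij⟩)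
    have hx_ne := compl_mem_ae_iff.2
      ((hsplit.measure_preimage hD.nullMeasurableSet).trans hD_null)
    filter_upwards [hx_ne] with x hx heq
    exact absurd heq hx
  filter_upwards [ae_all_iff.2 fun i => ae_all_iff.2 (hne i)] with x hx i j
  exact hx i j

lemma map_comp_pi_of_injective {κ : Type*} [Fintype κ] {X : κ → Type*} [∀ k, MeasurableSpace (X k)]
    (ν : ∀ k, Measure (X k)) [∀ k, IsProbabilityMeasure (ν k)] {h : ι → κ}
    (hh : Function.Injective h) :
    (Measure.pi ν).map (fun x i => x (h i)) = Measure.pi fun i => ν (h i) := by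
  have hindep : iIndepFun (fun (i : ι) (x : ∀ k, X k) => x (h i)) (Measure.pi ν) :=
    (iIndepFun_pi (X := fun k (x : X k) => x) fun _ => aemeasurable_id).precomp hh
  rw [(iIndepFun_iff_map_fun_eq_pi_map fun i => (measurable_pi_apply (h i)).aemeasurable).1 hindep]
  exact congrArg _ (funext fun i => (measurePreserving_eval ν (h i)).map_eq)

lemma cond_univ_pi {X : ι → Type*} [∀ i, MeasurableSpace (X i)] (μ : ∀ i, Measure (X i))
    [∀ i, IsFiniteMeasure (μ i)] {s : ∀ i, Set (X i)} (hs : ∀ i, MeasurableSet (s i)) :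
    (Measure.pi μ)[|Set.univ.pi s] = Measure.pi fun i => (μ i)[|s i] := by
  refine (Measure.pi_eq fun r _ => ?_).symm
  rw [cond_apply (MeasurableSet.univ_pi hs), ← Set.pi_inter_distrib, Measure.pi_pi,
    Measure.pi_pi, ENNReal.prod_inv_distrib, ← Finset.prod_mul_distrib]
  · simp_rw [cond_apply (hs _)]
  · exact fun _ _ _ _ _ => Or.inr (measure_ne_top _ _)

lemma pi_inter_univ_pi_le_of_cond_le {Ω : Type*} [MeasurableSpace Ω] [Nonempty ι]
    (μ : Measure Ω) [IsFiniteMeasure μ] {B : Set Ω} (hB : MeasurableSet B) {A : Set (ι → Ω)}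
    {a : ℝ≥0∞} (h : μ B ≠ 0 → Measure.pi (fun _ : ι => μ[|B]) A ≤ a) :
    Measure.pi (fun _ : ι => μ) (A ∩ Set.univ.pi fun _ => B) ≤
      a * Measure.pi (fun _ : ι => μ) (Set.univ.pi fun _ => B) := by
  by_cases hB0 : μ B = 0
  · have hpi : Measure.pi (fun _ : ι => μ) (Set.univ.pi fun _ => B) = 0 := by
      simp [Measure.pi_pi, hB0]
    rw [measure_mono_null Set.inter_subset_right hpi]
    exact zero_le
  · rw [Set.inter_comm, ← cond_mul_eq_inter (MeasurableSet.univ_pi fun _ => hB),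
      cond_univ_pi _ fun _ => hB]
    gcongr
    exact h hB0

end ProductMeasures

section Fubini

variable {Ω E : Type*} [MeasurableSpace Ω] [MeasurableSpace E]

lemma setLIntegral_measure_prodMk_le (μ : Measure Ω) [SFinite μ]
    (ν : Measure E) [SFinite ν] {s : Set (Ω × E)} (hs : MeasurableSet s) {A : Set Ω} {a : ℝ≥0∞}
    (h : ∀ e, μ (A ∩ {ω | (ω, e) ∈ s}) ≤ a * μ {ω | (ω, e) ∈ s}) :
    ∫⁻ ω in A, ν {e | (ω, e) ∈ s} ∂μ ≤ a * ∫⁻ ω, ν {e | (ω, e) ∈ s} ∂μ :=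
  calc ∫⁻ ω in A, ν {e | (ω, e) ∈ s} ∂μ
      = ∫⁻ e, μ (A ∩ {ω | (ω, e) ∈ s}) ∂ν := by
        refine ((Measure.prod_apply hs).symm.trans (Measure.prod_apply_symm hs)).trans ?_
        refine lintegral_congr fun e => ?_
        rw [Measure.restrict_apply (measurable_prodMk_right hs), Set.inter_comm]
        rfl
    _ ≤ ∫⁻ e, a * μ {ω | (ω, e) ∈ s} ∂ν := lintegral_mono h
    _ = a * ∫⁻ e, μ {ω | (ω, e) ∈ s} ∂ν :=
        lintegral_const_mul _ (measurable_measure_prodMk_right hs)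
    _ = a * ∫⁻ ω, ν {e | (ω, e) ∈ s} ∂μ :=
        congrArg _ ((Measure.prod_apply_symm hs).symm.trans (Measure.prod_apply hs))

lemma lintegral_measure_prodMk_eq_top (μ : Measure Ω) [SFinite μ] (ν : Measure E) [SFinite ν]
    (hν : ν Set.univ = ⊤) {s : Set (Ω × E)} (hs : MeasurableSet s) {c : ℝ≥0∞} (hc : c ≠ 0)
    (h : ∀ e, c ≤ μ {ω | (ω, e) ∈ s}) : ∫⁻ ω, ν {e | (ω, e) ∈ s} ∂μ = ⊤ :=
  top_unique <| calc
    ⊤ = ∫⁻ _, c ∂ν := by rw [lintegral_const, hν, ENNReal.mul_top hc]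
    _ ≤ ∫⁻ e, μ {ω | (ω, e) ∈ s} ∂ν := lintegral_mono h
    _ = ∫⁻ ω, ν {e | (ω, e) ∈ s} ∂μ :=
        (Measure.prod_apply_symm hs).symm.trans (Measure.prod_apply hs)

end Fubini

lemma eventually_injective_prefix {ι β : Type*} [Finite ι] {x : ι → ℕ → β}
    (hx : Function.Injective x) :
    ∀ᶠ m in atTop, Function.Injective fun i (k : Fin m) => x i k := by
  have hsep : ∀ i j, ∀ᶠ m in atTop,
      (fun k : Fin m => x i k) = (fun k : Fin m => x j k) → i = j := by
    intro i j
    by_cases hij : i = j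
    · exact Eventually.of_forall fun _ _ => hij
    · obtain ⟨k, hk⟩ := Function.ne_iff.1 (hx.ne hij)
      filter_upwards [eventually_gt_atTop k] with m hm heq
      exact absurd (congrFun heq ⟨k, hm⟩) hk
  filter_upwards [eventually_all.2 fun i => eventually_all.2 (hsep i)] with m hm i j
  exact hm i j

section RandomLabelling

variable {Ω ι κ τ : Type*} [MeasurableSpace Ω] [Fintype κ] [MeasurableSpace τ]

/-- The probability that a uniformly random labelling `κ → τ` gives the points `h` the
labels `t`. -/
def labelMatchProb (h : ι → κ) (t : ι → τ) : ℝ≥0∞ :=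
  Measure.pi (fun _ : κ => uniformOn (Set.univ : Set τ)) {ε | ∀ i, t i = ε (h i)}

lemma labelMatchProb_le_one [Finite τ] [Nonempty τ] (h : ι → κ) (t : ι → τ) :
    labelMatchProb h t ≤ 1 :=
  prob_le_one

lemma labelMatchProb_of_injective [Fintype ι] [Fintype τ] [Nonempty τ]
    [DiscreteMeasurableSpace τ] {h : ι → κ} (hh : Function.Injective h) (t : ι → τ) :
    labelMatchProb h t = (Fintype.card τ : ℝ≥0∞)⁻¹ ^ Fintype.card ι := by
  have hpre : {ε : κ → τ | ∀ i, t i = ε (h i)} = (fun ε i => ε (h i)) ⁻¹' {t} := by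
    ext ε
    simp [funext_iff, eq_comm]
  rw [labelMatchProb, hpre, ← Measure.map_apply (by fun_prop) (measurableSet_singleton t),
    map_comp_pi_of_injective _ hh, Measure.pi_singleton]
  simp [uniformOn_univ]

variable [MeasurableSpace κ] [DiscreteMeasurableSpace κ] [Finite τ] [DiscreteMeasurableSpace τ]

lemma measurable_labelMatchProb [Finite ι] {h : Ω → ι → κ} {t : Ω → ι → τ}
    (hh : Measurable h) (ht : Measurable t) : Measurable fun ω => labelMatchProb (h ω) (t ω) :=
  (Measurable.of_discrete (f := fun q : (ι → κ) × (ι → τ) => labelMatchProb q.1 q.2)).comp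
    (hh.prodMk ht)

lemma setLIntegral_labelMatchProb_le [Finite ι] (μ : Measure Ω) [SFinite μ]
    {h : Ω → ι → κ} {t : Ω → ι → τ} (hh : Measurable h) (ht : Measurable t) {A : Set Ω} {a : ℝ≥0∞}
    (hle : ∀ ε : κ → τ,
      μ (A ∩ {ω | ∀ i, t ω i = ε (h ω i)}) ≤ a * μ {ω | ∀ i, t ω i = ε (h ω i)}) :
    ∫⁻ ω in A, labelMatchProb (h ω) (t ω) ∂μ ≤ a * ∫⁻ ω, labelMatchProb (h ω) (t ω) ∂μ := by
  have hs : MeasurableSet {q : Ω × (κ → τ) | ∀ i, t q.1 i = q.2 (h q.1 i)} :=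
    (((hh.comp measurable_fst).prodMk (ht.comp measurable_fst)).prodMk measurable_snd)
      (MeasurableSet.of_discrete
        (s := {r : ((ι → κ) × (ι → τ)) × (κ → τ) | ∀ i, r.1.2 i = r.2 (r.1.1 i)}))
  exact setLIntegral_measure_prodMk_le μ _ hs hle

end RandomLabelling

section Derandomization

variable {Ω ι τ : Type*} [MeasurableSpace Ω] [MeasurableSpace τ] [DiscreteMeasurableSpace τ]

lemma tendsto_lintegral_labelMatchProb {β : Type*} [Fintype β] [MeasurableSpace β]
    [DiscreteMeasurableSpace β] [Fintype ι] [Fintype τ] [Nonempty τ] (μ : Measure Ω)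
    [IsFiniteMeasure μ] {x : Ω → ι → ℕ → β} {t : Ω → ι → τ}
    (hx : Measurable x) (ht : Measurable t) (hinj : ∀ᵐ ω ∂μ, Function.Injective (x ω)) :
    Tendsto (fun m => ∫⁻ ω, labelMatchProb (fun i (k : Fin m) => x ω i k) (t ω) ∂μ) atTop
      (𝓝 ((Fintype.card τ : ℝ≥0∞)⁻¹ ^ Fintype.card ι * μ Set.univ)) := by
  rw [← lintegral_const]
  refine tendsto_lintegral_of_dominated_convergence (fun _ => 1)
    (fun m => measurable_labelMatchProb (by fun_prop) ht)
    (fun m => ae_of_all _ fun ω => labelMatchProb_le_one _ _) (by simp) ?_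
  filter_upwards [hinj] with ω hω
  refine tendsto_const_nhds.congr' ?_
  filter_upwards [eventually_injective_prefix hω] with m hm
  exact (labelMatchProb_of_injective hm (t ω)).symm

variable {S : Type*} [MeasurableSpace S] [MeasurableSpace.CountablySeparated S] [Finite τ]

theorem measure_le_of_forall_labelling [Finite ι] [Nonempty τ] (μ : Measure Ω)
    [IsProbabilityMeasure μ] {x : Ω → ι → S} {t : Ω → ι → τ} (hx : Measurable x) (ht : Measurable t)
    (hinj : ∀ᵐ ω ∂μ, Function.Injective (x ω)) {A : Set Ω} {a : ℝ≥0∞}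
    (hle : ∀ g : S → τ, Measurable g →
      μ (A ∩ {ω | ∀ i, t ω i = g (x ω i)}) ≤ a * μ {ω | ∀ i, t ω i = g (x ω i)}) :
    μ A ≤ a := by
  cases nonempty_fintype ι
  cases nonempty_fintype τ
  obtain ⟨f, hf, hf_inj⟩ := MeasurableSpace.measurable_injection_nat_bool_of_countablySeparated S
  have hfx : Measurable fun ω i => f (x ω i) := by fun_prop
  have hfx_inj : ∀ᵐ ω ∂μ, Function.Injective fun i => f (x ω i) :=
    hinj.mono fun ω hω => hf_inj.comp hω
  set c : ℝ≥0∞ := (Fintype.card τ : ℝ≥0∞)⁻¹ ^ Fintype.card ι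
  have hc0 : c ≠ 0 := by simp [c]
  have hct : c ≠ ⊤ := by simp [c]
  have hA := tendsto_lintegral_labelMatchProb (μ.restrict A) hfx ht (ae_restrict_of_ae hfx_inj)
  have huniv := tendsto_lintegral_labelMatchProb μ hfx ht hfx_inj
  rw [Measure.restrict_apply_univ] at hA
  rw [measure_univ, mul_one] at huniv
  have hmul : c * μ A ≤ a * c :=
    le_of_tendsto_of_tendsto' hA (ENNReal.Tendsto.const_mul huniv (Or.inl hc0)) fun m =>
      setLIntegral_labelMatchProb_le μ (by fun_prop) ht fun ε =>
        hle (fun s => ε fun k => f s k) (Measurable.of_discrete.comp (by fun_prop))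
  rwa [mul_comm a, ENNReal.mul_le_mul_iff_right hc0 hct] at hmul

theorem pi_le_of_forall_cond_le [Fintype ι] [Nonempty ι] (μ : Measure Ω) [IsProbabilityMeasure μ]
    {X : Ω → S} {T : Ω → τ} (hX : Measurable X) (hT : Measurable T)
    [NullSingletonClass (μ.map X)] {A : Set (ι → Ω)} {a : ℝ≥0∞}
    (h : ∀ g : S → τ, Measurable g → μ {ω | T ω = g (X ω)} ≠ 0 →
      Measure.pi (fun _ : ι => μ[|{ω | T ω = g (X ω)}]) A ≤ a) :
    Measure.pi (fun _ : ι => μ) A ≤ a := by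
  have : Nonempty τ := μ.nonempty_of_neZero.map T
  have : MeasurableEq S := by
    obtain ⟨f, hf, hf_inj⟩ := MeasurableSpace.measurable_injection_nat_bool_of_countablySeparated S
    have hdiag := measurableSet_eq_fun (hf.comp measurable_fst) (hf.comp measurable_snd)
    simp only [Function.comp_apply, hf_inj.eq_iff] at hdiag
    exact ⟨hdiag⟩
  have := Measure.isProbabilityMeasure_map (μ := μ) hX.aemeasurable
  have hinj : ∀ᵐ ω ∂Measure.pi fun _ : ι => μ, Function.Injective fun i => X (ω i) := by
    have hmap := Measure.pi_map_pi (μ := fun _ : ι => μ) fun _ => hX.aemeasurable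
    have hX_pi : Measurable fun (ω : ι → Ω) i => X (ω i) := by fun_prop
    exact ae_of_ae_map hX_pi.aemeasurable (hmap ▸ ae_injective_pi fun _ : ι => μ.map X)
  refine measure_le_of_forall_labelling (t := fun ω i => T (ω i)) _ (by fun_prop) (by fun_prop)
    hinj fun g hg => ?_
  have hpi : {ω : ι → Ω | ∀ i, T (ω i) = g (X (ω i))} =
      Set.univ.pi fun _ => {ω | T ω = g (X ω)} := by
    ext ω
    simp only [Set.mem_ofPred_eq, Set.mem_univ_pi]
  rw [hpi]
  exact pi_inter_univ_pi_le_of_cond_le μ (measurableSet_eq_fun hT (hg.comp hX)) (h g hg)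

end Derandomization

lemma condIndepFun_of_ae_eq_measurable_right {Ω β γ : Type*} {m mΩ : MeasurableSpace Ω}
    [StandardBorelSpace Ω] {hm : m ≤ mΩ} {μ : Measure Ω} [IsFiniteMeasure μ]
    [MeasurableSpace β] [MeasurableSpace γ] {f : Ω → β} {g g' : Ω → γ}
    (hf : Measurable f) (hg' : Measurable[m] g') (h : g =ᵐ[μ] g') : CondIndepFun m hm f g μ := by
  rw [← condExpKernel_comp_trim (μ := μ) hm] at h
  exact Kernel.IndepFun.congr' (condIndepFun_of_measurable_right hf hg')
    (ae_of_all _ fun _ => ae_eq_rfl) (Measure.ae_ae_of_ae_comp h.symm)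

lemma map_ite_le {Ω β : Type*} [MeasurableSpace Ω] [MeasurableSpace β] (μ : Measure Ω)
    {p : Ω → Prop} [DecidablePred p] {f g : Ω → β} (hp : MeasurableSet {ω | p ω})
    (hf : Measurable f) (hg : Measurable g) :
    μ.map (fun ω => if p ω then f ω else g ω) ≤ μ.map f + μ.map g := by
  refine Measure.le_iff.2 fun s hs => ?_
  rw [Measure.map_apply (hf.ite hp hg) hs, Measure.add_apply, Measure.map_apply hf hs,
    Measure.map_apply hg hs]
  refine (measure_mono fun ω hω => ?_).trans (measure_union_le _ _)
  by_cases h : p ω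
  · exact Or.inl (by simpa [h] using hω)
  · exact Or.inr (by simpa [h] using hω)

section FullData

variable {p : ℕ}

@[fun_prop]
lemma measurable_Y1c : Measurable (Y1c (p := p)) := measurable_fst.comp measurable_snd

@[fun_prop]
lemma measurable_Y0c : Measurable (Y0c (p := p)) :=
  measurable_fst.comp (measurable_snd.comp measurable_snd)

@[fun_prop]
lemma measurable_Tc : Measurable (Tc (p := p)) :=
  measurable_snd.comp (measurable_snd.comp measurable_snd)

lemma measurable_Xc_apply (j : Fin p) : Measurable fun ω : FullData p => Xc ω j :=
  (measurable_pi_apply j).comp measurable_Xc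

lemma measurableSet_Tc : MeasurableSet {ω : FullData p | Tc ω = true} :=
  measurable_Tc (measurableSet_singleton true)

lemma measurable_obs : Measurable (obs (p := p)) :=
  measurable_Xc.prodMk (measurable_Tc.prodMk (measurable_Y1c.ite measurableSet_Tc measurable_Y0c))

@[fun_prop]
lemma measurable_obsData (n : ℕ) : Measurable (obsData (p := p) n) :=
  measurable_pi_lambda _ fun i => measurable_obs.comp (measurable_pi_apply i.castSucc)

@[fun_prop]
lemma measurable_testX (n : ℕ) : Measurable (testX (p := p) n) :=
  measurable_Xc.comp (measurable_pi_apply (Fin.last n))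

@[fun_prop]
lemma measurable_testITE (n : ℕ) : Measurable (testITE (p := p) n) := by
  unfold testITE
  fun_prop

instance isProbabilityMeasure_jointLaw (n : ℕ) (P : ProbabilityMeasure (FullData p)) :
    IsProbabilityMeasure (jointLaw n P) := by
  unfold jointLaw
  infer_instance

lemma memE.of_absolutelyContinuous {P Q : ProbabilityMeasure (FullData p)} (hP : memE P)
    (h : (Q : Measure (FullData p)) ≪ P) : memE Q := by
  obtain ⟨⟨j, hj⟩, h1, h0⟩ := hP
  exact ⟨⟨j, (h.map (measurable_Xc_apply j)).trans hj⟩,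
    fun y => (h.map measurable_Y1c) (h1 y), fun y => (h.map measurable_Y0c) (h0 y)⟩

lemma memE.nullSingletonClass_map_Xc {P : ProbabilityMeasure (FullData p)} (hP : memE P) :
    NullSingletonClass ((P : Measure (FullData p)).map Xc) := by
  obtain ⟨⟨j, hj⟩, -, -⟩ := hP
  refine ⟨fun x => ?_⟩
  have hxj := hj (Real.volume_singleton (a := x j))
  rw [Measure.map_apply (measurable_Xc_apply j) (measurableSet_singleton _)] at hxj
  rw [Measure.map_apply measurable_Xc (measurableSet_singleton _)]
  exact measure_mono_null (fun ω hω => congrFun hω j) hxj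

lemma memE.memPSI_cond_Tc_eq {P : ProbabilityMeasure (FullData p)} (hP : memE P)
    {g : (Fin p → ℝ) → Bool} (hg : Measurable g)
    (h0 : (P : Measure (FullData p)) {ω | Tc ω = g (Xc ω)} ≠ 0) :
    memPSI ⟨(P : Measure (FullData p))[|{ω | Tc ω = g (Xc ω)}], cond_isProbabilityMeasure h0⟩ := by
  have hmeas : MeasurableSet {ω : FullData p | Tc ω = g (Xc ω)} :=
    measurableSet_eq_fun measurable_Tc (hg.comp measurable_Xc)
  have : IsProbabilityMeasure ((P : Measure (FullData p))[|{ω | Tc ω = g (Xc ω)}]) :=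
    cond_isProbabilityMeasure h0
  exact ⟨hP.of_absolutelyContinuous cond_absolutelyContinuous,
    condIndepFun_of_ae_eq_measurable_right
      (μ := (P : Measure (FullData p))[|{ω | Tc ω = g (Xc ω)}])
      (measurable_Y1c.prodMk measurable_Y0c) (hg.comp (comap_measurable Xc))
      (ae_cond_of_forall_mem hmeas fun _ hω => hω)⟩

theorem jointLaw_le_of_forall_memPSI (n : ℕ) {A : Set (Fin (n + 1) → FullData p)} {a : ℝ≥0∞}
    (h : ∀ P : ProbabilityMeasure (FullData p), memPSI P → jointLaw n P A ≤ a)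
    {P : ProbabilityMeasure (FullData p)} (hP : memE P) : jointLaw n P A ≤ a :=
  have := hP.nullSingletonClass_map_Xc
  pi_le_of_forall_cond_le _ measurable_Xc measurable_Tc fun _ hg h0 =>
    h _ (hP.memPSI_cond_Tc_eq hg h0)

/-- The unit `ω` with its unobserved potential outcome replaced by the value for which the
treatment effect is `y`. -/
def imputeEffect (y : ℝ) (ω : FullData p) : FullData p :=
  (Xc ω, if Tc ω then Y1c ω else Y0c ω + y, if Tc ω then Y1c ω - y else Y0c ω, Tc ω)

@[fun_prop]
lemma measurable_imputeEffect (y : ℝ) : Measurable (imputeEffect (p := p) y) :=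
  measurable_Xc.prodMk
    ((measurable_Y1c.ite measurableSet_Tc (measurable_Y0c.add_const y)).prodMk
      (((measurable_Y1c.sub_const y).ite measurableSet_Tc measurable_Y0c).prodMk measurable_Tc))

lemma obs_imputeEffect (y : ℝ) (ω : FullData p) : obs (imputeEffect y ω) = obs ω := by
  cases h : ω.2.2.2 <;> simp [imputeEffect, obs, Xc, Y1c, Y0c, Tc, h]

lemma memE.map_imputeEffect {P : ProbabilityMeasure (FullData p)} (hP : memE P) (y : ℝ) :
    memE (P.map (measurable_imputeEffect y).aemeasurable) := by
  obtain ⟨hX, h1, h0⟩ := hP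
  have h1_sub : ∀ z, (P : Measure (FullData p)).map (fun ω => Y1c ω - y) {z} = 0 := fun z => by
    rw [← h1 (z + y), Measure.map_apply (by fun_prop) (measurableSet_singleton z),
      Measure.map_apply measurable_Y1c (measurableSet_singleton _)]
    simp only [Set.preimage, Set.mem_singleton_iff, sub_eq_iff_eq_add]
  have h0_add : ∀ z, (P : Measure (FullData p)).map (fun ω => Y0c ω + y) {z} = 0 := fun z => by
    rw [← h0 (z - y), Measure.map_apply (by fun_prop) (measurableSet_singleton z),
      Measure.map_apply measurable_Y0c (measurableSet_singleton _)]
    simp only [Set.preimage, Set.mem_singleton_iff, eq_sub_iff_add_eq]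
  unfold memE
  rw [ProbabilityMeasure.toMeasure_map,
    Measure.map_map measurable_Y1c (measurable_imputeEffect y),
    Measure.map_map measurable_Y0c (measurable_imputeEffect y)]
  refine ⟨?_, fun z => ?_, fun z => ?_⟩
  · obtain ⟨j, hj⟩ := hX
    refine ⟨j, ?_⟩
    rwa [Measure.map_map (measurable_Xc_apply j) (measurable_imputeEffect y)]
  · refine le_antisymm ((map_ite_le _ measurableSet_Tc measurable_Y1c
      (measurable_Y0c.add_const y) {z}).trans_eq ?_) zero_le
    rw [Measure.add_apply, h1, h0_add, add_zero]
  · refine le_antisymm ((map_ite_le _ measurableSet_Tc (measurable_Y1c.sub_const y)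
      measurable_Y0c {z}).trans_eq ?_) zero_le
    rw [Measure.add_apply, h1_sub, h0, add_zero]

lemma obsData_imputeEffect (n : ℕ) (y : ℝ) (ω : Fin (n + 1) → FullData p) :
    obsData n (fun i => imputeEffect y (ω i)) = obsData n ω :=
  funext fun i => obs_imputeEffect y (ω i.castSucc)

lemma testX_imputeEffect (n : ℕ) (y : ℝ) (ω : Fin (n + 1) → FullData p) :
    testX n (fun i => imputeEffect y (ω i)) = testX n ω := rfl

lemma testITE_imputeEffect (n : ℕ) (y : ℝ) (ω : Fin (n + 1) → FullData p) :
    testITE n (fun i => imputeEffect y (ω i)) = y := by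
  cases h : Tc (ω (Fin.last n)) <;> simp [testITE, imputeEffect, Y1c, Y0c, h]

lemma jointLaw_map_imputeEffect (n : ℕ) (P : ProbabilityMeasure (FullData p)) (y : ℝ) :
    jointLaw n (P.map (measurable_imputeEffect y).aemeasurable) =
      (jointLaw n P).map fun ω i => imputeEffect y (ω i) :=
  have := fun _ : Fin (n + 1) => Measure.isProbabilityMeasure_map
    (μ := (P : Measure (FullData p))) (measurable_imputeEffect y).aemeasurable
  (Measure.pi_map_pi fun _ => (measurable_imputeEffect y).aemeasurable).symm

variable {n : ℕ} {C : (Fin n → Obs p) → (Fin p → ℝ) → Set ℝ} {a : ℝ≥0∞}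

lemma jointLaw_notMem_le_of_coverage
    (hC : MeasurableSet {q : (Fin n → Obs p) × (Fin p → ℝ) × ℝ | q.2.2 ∈ C q.1 q.2.1})
    (hcov : ∀ P : ProbabilityMeasure (FullData p), memPSI P →
      jointLaw n P {ω | testITE n ω ∉ C (obsData n ω) (testX n ω)} ≤ a)
    {P : ProbabilityMeasure (FullData p)} (hP : memE P) (y : ℝ) :
    jointLaw n P {ω | y ∉ C (obsData n ω) (testX n ω)} ≤ a := by
  have hmiss : MeasurableSet
      {ω : Fin (n + 1) → FullData p | testITE n ω ∉ C (obsData n ω) (testX n ω)} :=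
    ((measurable_obsData n).prodMk ((measurable_testX n).prodMk (measurable_testITE n))) hC.compl
  have himp := jointLaw_le_of_forall_memPSI n hcov (hP.map_imputeEffect y)
  rw [jointLaw_map_imputeEffect, Measure.map_apply (by fun_prop) hmiss] at himp
  simpa only [Set.preimage_ofPred_eq, testITE_imputeEffect, testX_imputeEffect,
    obsData_imputeEffect] using himp

lemma lintegral_volume_eq_top_of_notMem_le
    (hC : MeasurableSet {q : (Fin n → Obs p) × (Fin p → ℝ) × ℝ | q.2.2 ∈ C q.1 q.2.1})
    (ha : a < 1) {P : ProbabilityMeasure (FullData p)}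
    (h : ∀ y : ℝ, jointLaw n P {ω | y ∉ C (obsData n ω) (testX n ω)} ≤ a) :
    ∫⁻ ω, volume (C (obsData n ω) (testX n ω)) ∂(jointLaw n P) = ⊤ := by
  have hgraph : MeasurableSet {q : (Fin (n + 1) → FullData p) × ℝ |
      q.2 ∈ C (obsData n q.1) (testX n q.1)} :=
    (((measurable_obsData n).comp measurable_fst).prodMk
      (((measurable_testX n).comp measurable_fst).prodMk measurable_snd)) hC
  have hhit : ∀ y : ℝ, 1 - a ≤ jointLaw n P {ω | y ∈ C (obsData n ω) (testX n ω)} := fun y => by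
    have hmeas : MeasurableSet {ω | y ∉ C (obsData n ω) (testX n ω)} :=
      (measurable_prodMk_right hgraph).compl
    have hcompl := prob_compl_eq_one_sub (μ := jointLaw n P) hmeas
    simp only [Set.compl_ofPred, not_not] at hcompl
    exact hcompl ▸ tsub_le_tsub_left (h y) 1
  exact lintegral_measure_prodMk_eq_top _ _ Real.volume_univ hgraph (tsub_pos_of_lt ha).ne' hhit

theorem finite_sample_impossibility_general
    (hC : MeasurableSet {q : (Fin n → Obs p) × (Fin p → ℝ) × ℝ | q.2.2 ∈ C q.1 q.2.1})
    (ha : a < 1)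
    (hcov : ∀ P : ProbabilityMeasure (FullData p), memPSI P →
      jointLaw n P {ω | testITE n ω ∉ C (obsData n ω) (testX n ω)} ≤ a)
    {P : ProbabilityMeasure (FullData p)} (hP : memE P) :
    (∀ y : ℝ, jointLaw n P {ω | y ∉ C (obsData n ω) (testX n ω)} ≤ a) ∧
      ∫⁻ ω, volume (C (obsData n ω) (testX n ω)) ∂(jointLaw n P) = ⊤ :=
  have hmiss := jointLaw_notMem_le_of_coverage hC hcov hP
  ⟨hmiss, lintegral_volume_eq_top_of_notMem_le hC ha hmiss⟩

end FullData

/-- If a prediction set `Ĉ_{n,α}` (a jointly measurable, set-valued map built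
from the observed data) satisfies the uniform finite-sample coverage guarantee
`sup_{P ∈ P_SI} P_P(Δ ∉ Ĉ_{n,α}(X)) ≤ α` for some `α ∈ (0,1)`, then for every `P ∈ P_SI` and
every `y ∈ ℝ` we have `P_P(y ∉ Ĉ_{n,α}(X)) ≤ α`, and consequently
`E_P[length(Ĉ_{n,α}(X))] = ∞`. -/
theorem finite_sample_impossibility {p : ℕ} (n : ℕ)
    (C : (Fin n → Obs p) → (Fin p → ℝ) → Set ℝ)
    (hC : MeasurableSet {q : (Fin n → Obs p) × (Fin p → ℝ) × ℝ | q.2.2 ∈ C q.1 q.2.1})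
    (α : ℝ) (hα : α ∈ Set.Ioo (0 : ℝ) 1)
    (hcov : ∀ P : ProbabilityMeasure (FullData p), memPSI P →
      jointLaw n P {ω | testITE n ω ∉ C (obsData n ω) (testX n ω)} ≤ ENNReal.ofReal α) :
    ∀ P : ProbabilityMeasure (FullData p), memPSI P →
      (∀ y : ℝ,
        jointLaw n P {ω | y ∉ C (obsData n ω) (testX n ω)} ≤ ENNReal.ofReal α) ∧
      ∫⁻ ω, volume (C (obsData n ω) (testX n ω)) ∂(jointLaw n P) = ⊤ :=
  fun _ hP => finite_sample_impossibility_general hC (ENNReal.ofReal_lt_one.2 hα.2) hcov hP.1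

end
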